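/- arXiv:2311.18426 — 2 statements merged into one kernel-verified Lean document; each statement's English description precedes it below -/
import Mathlib

section
/- Let f : ℝ → ℝ be continuously differentiable and convex, let α ∈ (0,1), and let x, c ∈ ℝ with x ≠ c. Then D^α_c f(x) ≤ f′(x)(x−c)/(Γ(2−α)·|x−c|^α). -/
/-- The Caputo fractional derivative of order `α ∈ (0,1)` with terminal `c`. -/
noncomputable def caputo (α c : ℝ) (f : ℝ → ℝ) (x : ℝ) : ℝ :=
  (1 / Real.Gamma (1 - α)) * ∫ t in c..x, deriv f t / |x - t| ^ α

lemma caputo_aux (g : ℝ → ℝ) (hg : Continuous g) (hm : Monotone g) (α : ℝ)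
    (h1 : α < 1) (x c : ℝ) (h : c < x) :
    ∫ t in c..x, g t / |x - t| ^ α ≤ g x * ((x - c) ^ (1 - α) / (1 - α)) := by
  have hsub : ∫ t in c..x, g t / |x - t| ^ α
      = ∫ u in (0:ℝ)..(x - c), g (x - u) / |u| ^ α := by
    have := intervalIntegral.integral_comp_sub_left (a := c) (b := x)
      (fun u => g (x - u) / |u| ^ α) x
    simpa using this
  have hpos : 0 ≤ x - c := by linarith
  have hcongr : ∫ u in (0:ℝ)..(x - c), g (x - u) / |u| ^ α
      = ∫ u in (0:ℝ)..(x - c), g (x - u) * u ^ (-α) := by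
    apply intervalIntegral.integral_congr
    intro u hu
    rw [Set.uIcc_of_le hpos] at hu
    simp only [abs_of_nonneg hu.1, Real.rpow_neg hu.1, div_eq_mul_inv]
  have hint : IntervalIntegrable (fun u : ℝ => u ^ (-α)) MeasureTheory.volume 0 (x - c) :=
    intervalIntegral.intervalIntegrable_rpow' (by linarith)
  rw [hsub, hcongr]
  calc ∫ u in (0:ℝ)..(x - c), g (x - u) * u ^ (-α)
      ≤ ∫ u in (0:ℝ)..(x - c), g x * u ^ (-α) := by
        apply intervalIntegral.integral_mono_on hpos
        · exact hint.continuousOn_mul (by fun_prop)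
        · exact hint.const_mul _
        · intro u hu
          exact mul_le_mul_of_nonneg_right (hm (by linarith [hu.1])) (Real.rpow_nonneg hu.1 _)
    _ = g x * ((x - c) ^ (1 - α) / (1 - α)) := by
        rw [intervalIntegral.integral_const_mul, integral_rpow (Or.inl (by linarith))]
        have : -α + 1 = 1 - α := by ring
        rw [this, Real.zero_rpow (by linarith), sub_zero]

/-- for convex continuously differentiable `f`, the Caputo derivative is
bounded above by the corresponding first-derivative expression. -/
theorem caputo_le_of_convex (f : ℝ → ℝ) (hf : ContDiff ℝ 1 f)
    (hconv : ConvexOn ℝ Set.univ f) (α : ℝ) (hα : α ∈ Set.Ioo (0 : ℝ) 1)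
    (x c : ℝ) (hxc : x ≠ c) :
    caputo α c f x ≤ deriv f x * (x - c) / (Real.Gamma (2 - α) * |x - c| ^ α) := by
  obtain ⟨h0, h1⟩ := hα
  have hg : Continuous (deriv f) := hf.continuous_deriv le_rfl
  have hd : Differentiable ℝ f := hf.differentiable (by norm_num)
  have hm : Monotone (deriv f) := by
    have := hconv.monotoneOn_deriv (fun y _ => hd y)
    exact monotoneOn_univ.1 this
  have key : ∫ t in c..x, deriv f t / |x - t| ^ α
      ≤ deriv f x * ((x - c) / |x - c| ^ α / (1 - α)) := by
    rcases lt_or_gt_of_ne hxc with h | h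
    · have := caputo_aux (fun t => - deriv f (-t)) (by fun_prop)
        (fun a b hab => neg_le_neg (hm (neg_le_neg hab))) α h1 (-x) (-c) (by linarith)
      have e := intervalIntegral.integral_comp_neg (a := -c) (b := -x)
        (fun t => - deriv f t / |x - t| ^ α)
      have e2 : ∀ t : ℝ, |-x - t| = |x - -t| := fun t => by
        rw [← abs_neg]; congr 1; ring
      simp only [e2] at this
      rw [e, neg_neg, neg_neg, intervalIntegral.integral_symm] at this
      simp only [neg_div, intervalIntegral.integral_neg, neg_neg] at this
      refine this.trans (le_of_eq ?_)
      rw [abs_of_neg (by linarith : x - c < 0), Real.rpow_sub (by linarith), Real.rpow_one]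
      have : -x - -c = -(x - c) := by ring
      rw [this]
      ring
    · have := caputo_aux (deriv f) hg hm α h1 x c h
      rw [Real.rpow_sub (by linarith), Real.rpow_one] at this
      rwa [abs_of_pos (by linarith : 0 < x - c)]
  have hG : 0 < Real.Gamma (1 - α) := Real.Gamma_pos_of_pos (by linarith)
  have hG2 : Real.Gamma (2 - α) = (1 - α) * Real.Gamma (1 - α) := by
    rw [← Real.Gamma_add_one (by linarith)]; congr 1; ring
  unfold caputo
  refine (mul_le_mul_of_nonneg_left key (by positivity)).trans (le_of_eq ?_)
  rw [hG2]
  have : 1 - α ≠ 0 := by linarith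
  have : |x - c| ^ α ≠ 0 := (Real.rpow_pos_of_pos (abs_pos.2 (sub_ne_zero.2 hxc)) _).ne'
  field_simp
end

section
/- Let k ≥ 1 and let f : (Fin k → ℝ) → ℝ be twice continuously differentiable, convex, and L-smooth with L > 0, attaining a global minimum at x*. Let α ∈ (0,1), β ∈ ℝ, and define K₁, K₂ as in the pos_bound/neg_bound constants according to the sign of β with μ = 0, and suppose K₂ > 0. Let T ≥ 1 and let (s_t)_{t≥0} be a sequence with s_t > √5 + 2 for all t and satisfying (s_{t+1}+1)²/(s_{t+1}² − 4s_{t+1} − 1) + 2/s_{t+1} ≤ (s_t+1)²/(s_t² − 4s_t − 1) for all t. Let (λ_t) satisfy 1 − λ_tK₁ = s_t·|λ_t|·K₂ with λ_t ≠ 0, and set η_t = (1/(L·(1 − λ_tK₁)))·(s_t² − 4s_t − 1)/(s_t+1)². Let the sequence (x_t) satisfy x_{t+1} = x_t − η_t·δ^{α,β}_{c_t} f(x_t) with c_t = x_t + λ_t·∇f(x_t) (coordinate-wise fractional gradient operator). Then with x̄_T = (1/T)·Σ_{t=1}^{T} x_t: f(x̄_T) − f(x*) ≤ (L/2)·[(s₀+1)²/(s₀²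 − 4s₀ − 1) + 2/s₀]·‖x₀ − x*‖₂²/T. -/
/-- The Caputo fractional derivative of order `1 + α` (for `α ∈ (0,1)`) with terminal `c`. -/
noncomputable def caputoSucc (α c : ℝ) (f : ℝ → ℝ) (x : ℝ) : ℝ :=
  (Real.sign (x - c) / Real.Gamma (1 - α)) *
    ∫ t in c..x, deriv (deriv f) t / |x - t| ^ α

/-- The fractional gradient operator `δ^{α,β}_c f (x)`, with the convention that it is `0`
when `x = c`. -/
noncomputable def fracGrad (α β c : ℝ) (f : ℝ → ℝ) (x : ℝ) : ℝ :=
  if x = c then 0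
  else (Real.Gamma (2 - α) * |x - c| ^ α / (x - c)) *
    (caputo α c f x + β * |x - c| * caputoSucc α c f x)

/-- `f : ℝ → ℝ` is `L`-smooth. -/
def RSmooth (L : ℝ) (f : ℝ → ℝ) : Prop :=
  ∀ x y : ℝ, |f y - f x - deriv f x * (y - x)| ≤ L / 2 * (y - x) ^ 2

/-- `f : ℝ → ℝ` is `μ`-strongly convex. -/
def RStrongConvex (μ : ℝ) (f : ℝ → ℝ) : Prop :=
  ∀ x y : ℝ, μ / 2 * (y - x) ^ 2 ≤ f y - f x - deriv f x * (y - x)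

open scoped BigOperators

/-- The gradient of `f : (Fin k → ℝ) → ℝ` computed coordinate-wise via partial
derivatives of the one-dimensional slices. -/
noncomputable def partialGrad {k : ℕ} (f : (Fin k → ℝ) → ℝ) (x : Fin k → ℝ) :
    Fin k → ℝ :=
  fun i => deriv (fun y : ℝ => f (Function.update x i y)) (x i)

/-- The coordinate-wise fractional gradient operator `δ^{α,β}_c f (x)` for
`f : (Fin k → ℝ) → ℝ`. -/
noncomputable def fracGradVec {k : ℕ} (α β : ℝ) (c : Fin k → ℝ)
    (f : (Fin k → ℝ) → ℝ) (x : Fin k → ℝ) : Fin k → ℝ :=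
  fun i => fracGrad α β (c i) (fun y : ℝ => f (Function.update x i y)) (x i)

/-- `f : (Fin k → ℝ) → ℝ` is `L`-smooth (with respect to the Euclidean norm). -/
def VSmooth {k : ℕ} (L : ℝ) (f : (Fin k → ℝ) → ℝ) : Prop :=
  ∀ x y : Fin k → ℝ,
    |f y - f x - ∑ i, partialGrad f x i * (y i - x i)| ≤ L / 2 * ∑ i, (y i - x i) ^ 2

/-- `f : (Fin k → ℝ) → ℝ` is `μ`-strongly convex (with respect to the Euclidean norm). -/
def VStrongConvex {k : ℕ} (μ : ℝ) (f : (Fin k → ℝ) → ℝ) : Prop :=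
  ∀ x y : Fin k → ℝ,
    μ / 2 * ∑ i, (y i - x i) ^ 2 ≤ f y - f x - ∑ i, partialGrad f x i * (y i - x i)

/-- First order convexity inequality. -/
lemma aux_first_order {k : ℕ} {f : (Fin k → ℝ) → ℝ} {L : ℝ}
    (hconv : ConvexOn ℝ Set.univ f) (hsmooth : VSmooth L f) (x y : Fin k → ℝ) :
    f x + ∑ i, partialGrad f x i * (y i - x i) ≤ f y := by
  set S := ∑ i, partialGrad f x i * (y i - x i) with hS
  set C := L / 2 * ∑ i, (y i - x i) ^ 2 with hC
  have key : ∀ θ : ℝ, 0 < θ → θ ≤ 1 → f x + S - θ * C ≤ f y := by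
    intro θ h0 h1
    have e1 := hconv.2 (Set.mem_univ x) (Set.mem_univ y) (sub_nonneg.2 h1) h0.le (by ring)
    have e2 := (abs_le.1 (hsmooth x ((1 - θ) • x + θ • y))).1
    have c1 : ∑ i, partialGrad f x i * (((1 - θ) • x + θ • y) i - x i) = θ * S := by
      rw [hS, Finset.mul_sum]
      refine Finset.sum_congr rfl fun i _ => ?_
      simp only [Pi.add_apply, Pi.smul_apply, smul_eq_mul]; ring
    have c2 : L / 2 * ∑ i, (((1 - θ) • x + θ • y) i - x i) ^ 2 = θ ^ 2 * C := by
      rw [hC, Finset.mul_sum, Finset.mul_sum, Finset.mul_sum]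
      refine Finset.sum_congr rfl fun i _ => ?_
      simp only [Pi.add_apply, Pi.smul_apply, smul_eq_mul]; ring
    rw [c1, c2] at e2
    simp only [smul_eq_mul] at e1
    have : θ * (f x + S - θ * C) ≤ θ * f y := by nlinarith
    exact le_of_mul_le_mul_left this h0
  by_contra hcon
  push Not at hcon
  have hd : 0 < f x + S - f y := by linarith
  set d := f x + S - f y
  have hCp : 0 < |C| + 1 := by positivity
  have hm : 0 < min 1 (d / (2 * (|C| + 1))) := lt_min one_pos (by positivity)
  have := key _ hm (min_le_left _ _)
  have h2 : min 1 (d / (2 * (|C| + 1))) * C ≤ d / 2 := by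
    calc _ ≤ min 1 (d / (2 * (|C| + 1))) * (|C| + 1) := by
            apply mul_le_mul_of_nonneg_left _ hm.le
            linarith [le_abs_self C]
      _ ≤ (d / (2 * (|C| + 1))) * (|C| + 1) := by
            apply mul_le_mul_of_nonneg_right (min_le_right _ _) hCp.le
      _ = d / 2 := by field_simp
  linarith

lemma aux_slice {k : ℕ} {f : (Fin k → ℝ) → ℝ} {L : ℝ}
    (hconv : ConvexOn ℝ Set.univ f) (hsmooth : VSmooth L f) (x : Fin k → ℝ) (i : Fin k)
    (g : ℝ → ℝ) (hg : g = fun y : ℝ => f (Function.update x i y)) (a b : ℝ) :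
    0 ≤ (deriv g b - deriv g a) * (b - a) ∧
      (deriv g b - deriv g a) * (b - a) ≤ L * (b - a) ^ 2 := by
  have hp : ∀ a, partialGrad f (Function.update x i a) i = deriv g a := by
    intro a
    simp [partialGrad, hg]
  have s1 : ∀ a b, ∑ j, partialGrad f (Function.update x i a) j *
      (Function.update x i b j - Function.update x i a j) = deriv g a * (b - a) := by
    intro a b
    rw [Finset.sum_eq_single i]
    · rw [hp]; simp
    · intro j _ hj; simp [hj]
    · simp
  have s2 : ∀ a b, ∑ j, (Function.update x i b j - Function.update x i a j) ^ 2
      = (b - a) ^ 2 := by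
    intro a b
    rw [Finset.sum_eq_single i]
    · simp
    · intro j _ hj; simp [hj]
    · simp
  have f1 := aux_first_order hconv hsmooth (Function.update x i a) (Function.update x i b)
  have f2 := aux_first_order hconv hsmooth (Function.update x i b) (Function.update x i a)
  have g1 := (abs_le.1 (hsmooth (Function.update x i a) (Function.update x i b))).2
  have g2 := (abs_le.1 (hsmooth (Function.update x i b) (Function.update x i a))).2
  rw [s1] at f1 f2 g1 g2
  rw [s2] at g1 g2
  constructor <;> nlinarith

lemma aux_second {L : ℝ} {g : ℝ → ℝ} (hg : Differentiable ℝ (deriv g))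
    (h : ∀ a b, 0 ≤ (deriv g b - deriv g a) * (b - a) ∧
      (deriv g b - deriv g a) * (b - a) ≤ L * (b - a) ^ 2) (t : ℝ) :
    0 ≤ deriv (deriv g) t ∧ deriv (deriv g) t ≤ L := by
  constructor
  · have : Monotone (deriv g) := by
      intro a b hab
      rcases hab.eq_or_lt with rfl | hlt
      · exact le_rfl
      · have := nonneg_of_mul_nonneg_left (h a b).1 (sub_pos.2 hlt)
        linarith
    exact this.deriv_nonneg
  · have : Monotone (fun y => L * y - deriv g y) := by
      intro a b hab
      rcases hab.eq_or_lt with rfl | hlt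
      · exact le_rfl
      · have h1 : 0 ≤ (L * (b - a) - (deriv g b - deriv g a)) * (b - a) := by
          nlinarith [(h a b).2]
        have := nonneg_of_mul_nonneg_left h1 (sub_pos.2 hlt)
        simp only
        linarith
    have h2 := this.deriv_nonneg (x := t)
    have h3 : HasDerivAt (fun y => L * y - deriv g y) (L * 1 - deriv (deriv g) t) t :=
      HasDerivAt.sub ((hasDerivAt_id' t).const_mul L) (hg t).hasDerivAt
    rw [h3.deriv] at h2
    linarith

lemma aux_subst (α c x : ℝ) (φ : ℝ → ℝ) :
    ∫ t in c..x, φ t / |x - t| ^ α =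
      (x - c) * (|x - c| ^ α)⁻¹ * ∫ u in (0:ℝ)..1, u ^ (-α) * φ (x - (x - c) * u) := by
  have h := intervalIntegral.smul_integral_comp_sub_mul (a := 0) (b := 1)
    (fun t => φ t / |x - t| ^ α) (x - c) x
  have e : x - (x - c) * 1 = c := by ring
  rw [e, mul_zero, sub_zero] at h
  rw [← h, smul_eq_mul, mul_assoc]
  refine congrArg (fun I : ℝ => (x - c) * I) ?_
  rw [← intervalIntegral.integral_const_mul]
  refine intervalIntegral.integral_congr fun u hu => ?_
  rw [Set.uIcc_of_le zero_le_one] at hu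
  rw [show x - (x - (x - c) * u) = (x - c) * u by ring, abs_mul, abs_of_nonneg hu.1,
    Real.mul_rpow (abs_nonneg _) hu.1, Real.rpow_neg hu.1, div_eq_mul_inv, mul_inv]
  ring

lemma aux_fracGrad {α β c x : ℝ} (hα : α ∈ Set.Ioo (0 : ℝ) 1) (g : ℝ → ℝ) (hxc : x ≠ c) :
    fracGrad α β c g x = (1 - α) * (∫ u in (0:ℝ)..1, u ^ (-α) * deriv g (x - (x - c) * u)) +
      (1 - α) * β * (x - c) * ∫ u in (0:ℝ)..1, u ^ (-α) * deriv (deriv g) (x - (x - c) * u) := by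
  have hD : x - c ≠ 0 := sub_ne_zero.2 hxc
  have hα1 : 0 < 1 - α := by linarith [hα.2]
  have hG : Real.Gamma (2 - α) = (1 - α) * Real.Gamma (1 - α) := by
    rw [← Real.Gamma_add_one hα1.ne']; congr 1; ring
  have hGp : Real.Gamma (1 - α) ≠ 0 := (Real.Gamma_pos_of_pos hα1).ne'
  have hDp : |x - c| ^ α ≠ 0 := (Real.rpow_pos_of_pos (abs_pos.2 hD) _).ne'
  have hsg : |x - c| * Real.sign (x - c) = x - c := by
    rcases lt_or_gt_of_ne hD with h | h
    · rw [Real.sign_of_neg h, abs_of_neg h]; ring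
    · rw [Real.sign_of_pos h, abs_of_pos h]; ring
  rw [fracGrad, if_neg hxc, caputo, caputoSucc, aux_subst, aux_subst, hG]
  set I := ∫ u in (0:ℝ)..1, u ^ (-α) * deriv g (x - (x - c) * u)
  set J := ∫ u in (0:ℝ)..1, u ^ (-α) * deriv (deriv g) (x - (x - c) * u)
  set P := |x - c| ^ α
  set G := Real.Gamma (1 - α)
  have : β * |x - c| * (Real.sign (x - c) / G * ((x - c) * P⁻¹ * J)) =
      β * (x - c) / G * ((x - c) * P⁻¹ * J) := by
    calc _ = β * (|x - c| * Real.sign (x - c)) / G * ((x - c) * P⁻¹ * J) := by ring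
      _ = _ := by rw [hsg]
  rw [this]
  field_simp

lemma aux_bound {α β γ L c x : ℝ} (hα : α ∈ Set.Ioo (0 : ℝ) 1)
    (hγ : γ = (1 - α) / (2 - α)) (hL : 0 < L) (g : ℝ → ℝ)
    (hg : Differentiable ℝ (deriv g)) (hg2 : Continuous (deriv (deriv g)))
    (h : ∀ a b, 0 ≤ (deriv g b - deriv g a) * (b - a) ∧
      (deriv g b - deriv g a) * (b - a) ≤ L * (b - a) ^ 2) (hxc : x ≠ c) :
    |fracGrad α β c g x - deriv g x - L / 2 * (β - γ) * (x - c)| ≤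
      L / 2 * (|β| + γ) * |x - c| := by
  have hα1 : 0 < 1 - α := by linarith [hα.2]
  rw [aux_fracGrad hα g hxc]
  set D := x - c with hDdef
  have hI : IntervalIntegrable (fun u : ℝ => u ^ (-α)) MeasureTheory.volume 0 1 :=
    intervalIntegral.intervalIntegrable_rpow' (by linarith)
  have hint : ∀ φ : ℝ → ℝ, Continuous φ →
      IntervalIntegrable (fun u : ℝ => u ^ (-α) * φ u) MeasureTheory.volume 0 1 :=
    fun φ hφ => hI.mul_continuousOn hφ.continuousOn
  have i0 : ∫ u in (0:ℝ)..1, u ^ (-α) = 1 / (1 - α) := by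
    rw [integral_rpow (Or.inl (by linarith))]
    rw [Real.one_rpow, Real.zero_rpow (by linarith)]
    rw [show -α + 1 = 1 - α by ring]; ring
  have i1 : ∫ u in (0:ℝ)..1, u ^ (-α) * u = 1 / (2 - α) := by
    have : ∫ u in (0:ℝ)..1, u ^ (-α) * u = ∫ u in (0:ℝ)..1, u ^ (1 - α) := by
      refine intervalIntegral.integral_congr fun u hu => ?_
      rw [Set.uIcc_of_le zero_le_one] at hu
      rcases hu.1.eq_or_lt with h0 | h0
      · rw [← h0, Real.zero_rpow hα1.ne']; simp
      · rw [show 1 - α = -α + 1 by ring, Real.rpow_add_one h0.ne']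
    rw [this, integral_rpow (Or.inl (by linarith))]
    rw [Real.one_rpow, Real.zero_rpow (by linarith)]
    rw [show 1 - α + 1 = 2 - α by ring]; ring
  have c1 : Continuous (fun u => deriv g (x - D * u)) :=
    hg.continuous.comp (by fun_prop)
  have c2 : Continuous (fun u => deriv (deriv g) (x - D * u)) :=
    hg2.comp (by fun_prop)
  have hlin : ∀ p q r w : ℝ, ∫ v in (0:ℝ)..1, (p * (v ^ (-α) * deriv g (x - D * v)) +
      q * (v ^ (-α) * deriv (deriv g) (x - D * v)) + r * v ^ (-α) + w * (v ^ (-α) * v)) =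
      p * (∫ v in (0:ℝ)..1, v ^ (-α) * deriv g (x - D * v)) +
      q * (∫ v in (0:ℝ)..1, v ^ (-α) * deriv (deriv g) (x - D * v)) +
      r * (1 / (1 - α)) + w * (1 / (2 - α)) := by
    intro p q r w
    have j1 := (hint _ c1).const_mul p
    have j2 := (hint _ c2).const_mul q
    have j3 := hI.const_mul r
    have j4 := (hint _ continuous_id).const_mul w
    simp only [id] at j4
    rw [intervalIntegral.integral_add ((j1.add j2).add j3) j4,
      intervalIntegral.integral_add (j1.add j2) j3, intervalIntegral.integral_add j1 j2]
    simp only [intervalIntegral.integral_const_mul, i0, i1]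
  have hE := hlin (1 - α) ((1 - α) * β * D) (-(1 - α) * (deriv g x + β * D * L / 2))
    ((1 - α) * (D * L / 2))
  have hB := hlin 0 0 ((1 - α) * |D| * (L / 2) * |β|) ((1 - α) * |D| * (L / 2))
  have h2α : 2 - α ≠ 0 := by linarith
  have e1 : ∀ A B : ℝ, (1 - α) * A + (1 - α) * β * D * B - deriv g x - L / 2 * (β - γ) * D =
      (1 - α) * A + (1 - α) * β * D * B + -(1 - α) * (deriv g x + β * D * L / 2) * (1 / (1 - α)) +
      (1 - α) * (D * L / 2) * (1 / (2 - α)) := by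
    intro A B
    rw [hγ]; field_simp; ring
  have e2 : ∀ A B : ℝ, L / 2 * (|β| + γ) * |D| = 0 * A + 0 * B +
      (1 - α) * |D| * (L / 2) * |β| * (1 / (1 - α)) + (1 - α) * |D| * (L / 2) * (1 / (2 - α)) := by
    intro A B
    rw [hγ]; field_simp; ring
  rw [e1, ← hE, e2, ← hB, ← Real.norm_eq_abs]
  refine intervalIntegral.norm_integral_le_of_norm_le zero_le_one ?_ ?_
  · refine Filter.Eventually.of_forall fun u hu => ?_
    have hu0 : 0 < u := hu.1
    have hup : 0 ≤ u ^ (-α) := Real.rpow_nonneg hu0.le _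
    have hs := aux_second hg h (x - D * u)
    obtain ⟨a1, a2⟩ := h x (x - D * u)
    set p := deriv g (x - D * u) - deriv g x with hp
    set G := deriv (deriv g) (x - D * u)
    have b1 : |p + L / 2 * (D * u)| ≤ L / 2 * (|D| * u) := by
      rw [show x - D * u - x = -(D * u) by ring] at a1 a2
      have hab : |D| * u = |D * u| := by rw [abs_mul, abs_of_pos hu0]
      rw [hab]
      generalize D * u = z at a1 a2 hp ⊢
      rcases lt_trichotomy z 0 with hz | hz | hz
      · have r1 : 0 ≤ p := nonneg_of_mul_nonneg_left a1 (by linarith)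
        have r2 : p ≤ L * -z := by
          apply le_of_mul_le_mul_right _ (neg_pos.2 hz); linarith
        rw [abs_of_neg hz]
        exact abs_le.2 ⟨by linarith, by linarith⟩
      · subst hz
        simp [hp]
      · have r1 : p ≤ 0 := by nlinarith
        have r2 : -p ≤ L * z := by
          apply le_of_mul_le_mul_right _ hz; linarith
        rw [abs_of_pos hz]
        exact abs_le.2 ⟨by linarith, by linarith⟩
    have b2 : |β * D * (G - L / 2)| ≤ |D| * (L / 2) * |β| := by
      rw [abs_mul, abs_mul]
      have : |G - L / 2| ≤ L / 2 := abs_le.2 ⟨by linarith, by linarith⟩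
      calc _ ≤ |β| * |D| * (L / 2) := by gcongr
        _ = _ := by ring
    rw [Real.norm_eq_abs]
    calc _ = |((1 - α) * u ^ (-α)) * ((p + L / 2 * (D * u)) + β * D * (G - L / 2))| := by
          congr 1; rw [hp]; ring
      _ = ((1 - α) * u ^ (-α)) * |(p + L / 2 * (D * u)) + β * D * (G - L / 2)| := by
          rw [abs_mul, abs_of_nonneg (by positivity)]
      _ ≤ ((1 - α) * u ^ (-α)) * (L / 2 * (|D| * u) + |D| * (L / 2) * |β|) := by
          gcongr
          exact (abs_add_le _ _).trans (add_le_add b1 b2)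
      _ = _ := by ring
  · have j1 := (hint _ c1).const_mul 0
    have j2 := (hint _ c2).const_mul 0
    have j3 := hI.const_mul ((1 - α) * |D| * (L / 2) * |β|)
    have j4 := (hint _ continuous_id).const_mul ((1 - α) * |D| * (L / 2))
    exact ((j1.add j2).add j3).add j4

lemma aux_scalar {s L h g v y a : ℝ} (hs : Real.sqrt 5 + 2 < s) (hL : 0 < L)
    (hh : h = 1 / L * ((s ^ 2 - 4 * s - 1) / (s + 1) ^ 2))
    (ha : a = (s + 1) ^ 2 / (s ^ 2 - 4 * s - 1)) (hv : |v - g| ≤ |g| / s) :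
    g * y - g ^ 2 / (2 * L) - h * (g * v) + L / 2 * (h * v) ^ 2 ≤
      L / 2 * ((a + 2 / s) * y ^ 2 - a * (y - h * v) ^ 2) := by
  have h5 : 0 ≤ Real.sqrt 5 := Real.sqrt_nonneg 5
  have h55 : Real.sqrt 5 ^ 2 = 5 := Real.sq_sqrt (by norm_num)
  have hs2 : 2 < s := by linarith
  have hs0 : 0 < s := by linarith
  have hQ : 0 < s ^ 2 - 4 * s - 1 := by nlinarith
  have hhp : 0 < h := by rw [hh]; positivity
  have hah : a * h * L = 1 := by 
    have hQ' := hQ.ne'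
    rw [ha, hh]
    generalize s ^ 2 - 4 * s - 1 = Q at hQ'
    field_simp
  have hhL : h * L * (s + 1) ^ 2 = s ^ 2 - 4 * s - 1 := by rw [hh]; field_simp
  have m1 : (g - v) * y ≤ L / s * y ^ 2 + g ^ 2 / (2 * L) := by
    have t1 : (g - v) * y ≤ |g| / s * |y| := by
      calc _ ≤ |(g - v) * y| := le_abs_self _
        _ = |v - g| * |y| := by rw [abs_mul, abs_sub_comm]
        _ ≤ _ := by gcongr
    have t2 : |g| / s * |y| ≤ L / s * y ^ 2 + g ^ 2 / (2 * L * s) := by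
      rw [← sq_abs y, ← sq_abs g]
      have : L / s * |y| ^ 2 + |g| ^ 2 / (2 * L * s) - |g| / s * |y| =
        ((L * |y| - |g| / 2) ^ 2 + |g| ^ 2 / 4) / (L * s) := by
        field_simp; ring
      have h0 : 0 ≤ ((L * |y| - |g| / 2) ^ 2 + |g| ^ 2 / 4) / (L * s) := by positivity
      linarith
    have t3 : g ^ 2 / (2 * L * s) ≤ g ^ 2 / (2 * L) := by
      apply div_le_div_of_nonneg_left (by positivity) (by positivity)
      nlinarith
    linarith
  have m2 : s * v ^ 2 ≤ (s + 1) * (g * v) ∧ 0 ≤ g * v := by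
    rw [le_div_iff₀ hs0] at hv
    obtain ⟨w1, w2⟩ : -|g| ≤ (v - g) * s ∧ (v - g) * s ≤ |g| := by
      apply abs_le.1; rw [abs_mul, abs_of_pos hs0]; exact hv
    rcases le_total 0 g with hg | hg
    · rw [abs_of_nonneg hg] at w1 w2
      have hv0 : 0 ≤ v := by
        by_contra hc; push Not at hc; nlinarith
      exact ⟨by nlinarith, by positivity⟩
    · rw [abs_of_nonpos hg] at w1 w2
      have hv0 : v ≤ 0 := by
        by_contra hc; push Not at hc; nlinarith
      exact ⟨by nlinarith, by nlinarith⟩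
  have m3 : (h * L + 1) / 2 * v ^ 2 ≤ g * v := by
    have : (h * L + 1) * (s + 1) ^ 2 = 2 * s * (s - 1) := by linarith
    have k1 : (h * L + 1) / 2 = s * (s - 1) / (s + 1) ^ 2 := by
      field_simp; linarith
    rw [k1, div_mul_eq_mul_div, div_le_iff₀ (by positivity)]
    nlinarith [mul_le_mul_of_nonneg_left m2.1 (by linarith : 0 ≤ s - 1), mul_nonneg m2.2 hs0.le]
  have m4 := mul_le_mul_of_nonneg_left m3 hhp.le
  have eq : L / 2 * ((a + 2 / s) * y ^ 2 - a * (y - h * v) ^ 2) =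
      L / s * y ^ 2 + (a * h * L) * v * y - (a * h * L) * h * v ^ 2 / 2 := by ring
  rw [eq, hah]
  nlinarith

/-- `O(1/T)` convergence of fractional gradient descent for general smooth
and convex functions in higher dimensions. -/
theorem fracGradDescent_smooth_convex_general (k : ℕ) (hk : 1 ≤ k)
    (f : (Fin k → ℝ) → ℝ) (hf : ContDiff ℝ 2 f) (L : ℝ) (hL : 0 < L)
    (hconv : ConvexOn ℝ Set.univ f) (hsmooth : VSmooth L f)
    (xstar : Fin k → ℝ) (hxstar : ∀ y, f xstar ≤ f y)
    (α β γ K₁ K₂ : ℝ) (hα : α ∈ Set.Ioo (0 : ℝ) 1) (hγ : γ = (1 - α) / (2 - α))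
    (hK₁ : K₁ = L / 2 * (β - γ))
    (hK₂pos : 0 ≤ β → K₂ = L / 2 * (β + γ))
    (hK₂neg : β ≤ 0 → K₂ = -(L / 2) * (β - γ))
    (hK₂ : 0 < K₂)
    (s : ℕ → ℝ) (hs : ∀ t, Real.sqrt 5 + 2 < s t)
    (htel : ∀ t, (s (t + 1) + 1) ^ 2 / ((s (t + 1)) ^ 2 - 4 * s (t + 1) - 1) +
        2 / s (t + 1) ≤ (s t + 1) ^ 2 / ((s t) ^ 2 - 4 * s t - 1))
    (lam η : ℕ → ℝ) (hlam0 : ∀ t, lam t ≠ 0)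
    (hlam : ∀ t, 1 - lam t * K₁ = s t * (|lam t| * K₂))
    (hη : ∀ t, η t = 1 / (L * (1 - lam t * K₁)) *
      (((s t) ^ 2 - 4 * s t - 1) / (s t + 1) ^ 2))
    (T : ℕ) (hT : 1 ≤ T) (x : ℕ → Fin k → ℝ)
    (hrec : ∀ t, x (t + 1) =
      fun i => x t i - η t *
        fracGradVec α β (fun j => x t j + lam t * partialGrad f (x t) j) f (x t) i)
    (xbar : Fin k → ℝ) (hxbar : xbar = fun i => (1 / (T : ℝ)) * ∑ t ∈ Finset.Icc 1 T, x t i) :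
    f xbar - f xstar ≤
      L / 2 * ((s 0 + 1) ^ 2 / ((s 0) ^ 2 - 4 * s 0 - 1) + 2 / s 0) *
        (∑ i, (x 0 i - xstar i) ^ 2) / T := by
  have hK₂' : K₂ = L / 2 * (|β| + γ) := by
    rcases le_total 0 β with hb | hb
    · rw [hK₂pos hb, abs_of_nonneg hb]
    · rw [hK₂neg hb, abs_of_nonpos hb]; ring
  have hgs : partialGrad f xstar = 0 := by
    funext i
    have : IsLocalMin (fun y : ℝ => f (Function.update xstar i y)) (xstar i) := by
      refine Filter.Eventually.of_forall fun y => ?_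
      simp only [Function.update_eq_self]
      exact hxstar _
    exact this.deriv_eq_zero
  have hcoco : ∀ z, f z - f xstar ≤ ∑ i, (partialGrad f z i * (z i - xstar i) -
      partialGrad f z i ^ 2 / (2 * L)) := by
    intro z
    have h1 := aux_first_order hconv hsmooth z (fun i => xstar i + partialGrad f z i / L)
    have h2 := (abs_le.1 (hsmooth xstar (fun i => xstar i + partialGrad f z i / L))).2
    rw [hgs] at h2
    simp only [Pi.zero_apply, zero_mul, Finset.sum_const_zero, sub_zero] at h2
    have h3 : L / 2 * ∑ i, (xstar i + partialGrad f z i / L - xstar i) ^ 2 -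
      ∑ i, partialGrad f z i * (xstar i + partialGrad f z i / L - z i) =
      ∑ i, (partialGrad f z i * (z i - xstar i) - partialGrad f z i ^ 2 / (2 * L)) := by
      rw [Finset.mul_sum, ← Finset.sum_sub_distrib]
      refine Finset.sum_congr rfl fun i _ => ?_
      field_simp; ring
    linarith
  have hdelta : ∀ t i, |fracGradVec α β (fun j => x t j + lam t * partialGrad f (x t) j) f (x t) i -
      (1 - lam t * K₁) * partialGrad f (x t) i| ≤ |lam t| * K₂ * |partialGrad f (x t) i| := by
    intro t i
    by_cases h0 : partialGrad f (x t) i = 0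
    · simp [fracGradVec, fracGrad, h0]
    · have hC : ContDiff ℝ 2 (fun y : ℝ => f (Function.update (x t) i y)) :=
        hf.comp (contDiff_update 2 (x t) i)
      have hC1 : ContDiff ℝ 1 (deriv (fun y : ℝ => f (Function.update (x t) i y))) := by
        have : ContDiff ℝ (1 + 1) (fun y : ℝ => f (Function.update (x t) i y)) := by
          convert hC using 1; norm_num
        exact (contDiff_succ_iff_deriv.1 this).2.2
      have hb := aux_bound (α := α) (β := β) (γ := γ) (L := L) (x := x t i)
        (c := x t i + lam t * partialGrad f (x t) i) hα hγ hL
        _ (hC1.differentiable one_ne_zero) (hC1.continuous_deriv le_rfl)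
        (aux_slice hconv hsmooth (x t) i _ rfl) (by
          have := mul_ne_zero (hlam0 t) h0
          intro hh; apply this; linarith)
      rw [← hK₁, ← hK₂'] at hb
      have e : x t i - (x t i + lam t * partialGrad f (x t) i) =
        -(lam t * partialGrad f (x t) i) := by ring
      rw [e, abs_neg, abs_mul] at hb
      calc _ = _ := by
            congr 1
            rw [show (1 - lam t * K₁) * partialGrad f (x t) i = partialGrad f (x t) i +
              K₁ * -(lam t * partialGrad f (x t) i) by ring, ← sub_sub]
            rfl
        _ ≤ _ := hb
        _ = _ := by ring
  have hstep : ∀ t, f (x (t + 1)) - f xstar ≤ L / 2 *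
      (((s t + 1) ^ 2 / ((s t) ^ 2 - 4 * s t - 1) + 2 / s t) * (∑ i, (x t i - xstar i) ^ 2) -
      ((s t + 1) ^ 2 / ((s t) ^ 2 - 4 * s t - 1)) * (∑ i, (x (t + 1) i - xstar i) ^ 2)) := by
    intro t
    have hs0 : 0 < s t := by linarith [hs t, Real.sqrt_nonneg 5]
    set A := 1 - lam t * K₁ with hA
    have hlp : 0 < |lam t| * K₂ := mul_pos (abs_pos.2 (hlam0 t)) hK₂
    have hAp : 0 < A := by rw [hA, hlam t]; positivity
    set h := 1 / L * (((s t) ^ 2 - 4 * s t - 1) / (s t + 1) ^ 2) with hh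
    have hηh : η t = h / A := by rw [hη t, hh, ← hA, one_div, mul_inv]; ring
    set δ := fracGradVec α β (fun j => x t j + lam t * partialGrad f (x t) j) f (x t) with hδ
    have hx : ∀ i, x (t + 1) i = x t i - h * (δ i / A) := by
      intro i
      rw [hrec t, hηh]; simp only; ring
    have hv : ∀ i, |δ i / A - partialGrad f (x t) i| ≤ |partialGrad f (x t) i| / s t := by
      intro i
      have := hdelta t i
      rw [show δ i / A - partialGrad f (x t) i = (δ i - A * partialGrad f (x t) i) / A by
        field_simp, abs_div, abs_of_pos hAp, div_le_div_iff₀ hAp hs0]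
      calc _ ≤ |lam t| * K₂ * |partialGrad f (x t) i| * s t := by gcongr
        _ = _ := by rw [hA, hlam t]; ring
    have h1 := (abs_le.1 (hsmooth (x t) (x (t + 1)))).2
    have h2 := hcoco (x t)
    have h3 := Finset.sum_le_sum (s := Finset.univ) fun i _ =>
      aux_scalar (y := x t i - xstar i) (hs t) hL hh rfl (hv i)
    have e1 : ∑ i, L / 2 * (((s t + 1) ^ 2 / ((s t) ^ 2 - 4 * s t - 1) + 2 / s t) *
      (x t i - xstar i) ^ 2 - ((s t + 1) ^ 2 / ((s t) ^ 2 - 4 * s t - 1)) *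
        (x t i - xstar i - h * (δ i / A)) ^ 2) = L / 2 *
      (((s t + 1) ^ 2 / ((s t) ^ 2 - 4 * s t - 1) + 2 / s t) * (∑ i, (x t i - xstar i) ^ 2) -
      ((s t + 1) ^ 2 / ((s t) ^ 2 - 4 * s t - 1)) * (∑ i, (x (t + 1) i - xstar i) ^ 2)) := by
      rw [← Finset.mul_sum, Finset.sum_sub_distrib, ← Finset.mul_sum, ← Finset.mul_sum]
      simp only [hx]
      congr 4
      funext i; ring
    rw [← e1]
    refine le_trans ?_ h3
    have e2 : ∑ i, (partialGrad f (x t) i * (x t i - xstar i) - partialGrad f (x t) i ^ 2 / (2 * L)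
      - h * (partialGrad f (x t) i * (δ i / A)) + L / 2 * (h * (δ i / A)) ^ 2) =
      ∑ i, (partialGrad f (x t) i * (x t i - xstar i) - partialGrad f (x t) i ^ 2 / (2 * L)) +
      ∑ i, partialGrad f (x t) i * (x (t + 1) i - x t i) +
      L / 2 * ∑ i, (x (t + 1) i - x t i) ^ 2 := by
      rw [Finset.mul_sum, ← Finset.sum_add_distrib, ← Finset.sum_add_distrib]
      refine Finset.sum_congr rfl fun i _ => ?_
      rw [hx]; ring
    rw [e2]
    linarith
  have hsum : ∀ n : ℕ, ∑ t ∈ Finset.Icc 1 n, (f (x t) - f xstar) ≤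
      L / 2 * (((s 0 + 1) ^ 2 / ((s 0) ^ 2 - 4 * s 0 - 1) + 2 / s 0) *
        (∑ i, (x 0 i - xstar i) ^ 2)) -
      L / 2 * (((s n + 1) ^ 2 / ((s n) ^ 2 - 4 * s n - 1) + 2 / s n) *
        (∑ i, (x n i - xstar i) ^ 2)) := by
    intro n
    induction n with
    | zero => simp
    | succ n ih =>
      rw [Finset.sum_Icc_succ_top (by omega)]
      have h1 := hstep n
      have hR : 0 ≤ ∑ i, (x (n + 1) i - xstar i) ^ 2 := Finset.sum_nonneg fun i _ => sq_nonneg _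
      have h2 := mul_le_mul_of_nonneg_left (mul_le_mul_of_nonneg_right (htel n) hR)
        (half_pos hL).le
      linarith
  have hTp : (0 : ℝ) < T := by exact_mod_cast hT
  have hJ : f xbar ≤ ∑ t ∈ Finset.Icc 1 T, (1 / (T : ℝ)) * f (x t) := by
    have := hconv.map_sum_le (t := Finset.Icc 1 T) (w := fun _ => 1 / (T : ℝ)) (p := x)
      (fun _ _ => by positivity) (by simp; field_simp) (fun _ _ => Set.mem_univ _)
    simp only [smul_eq_mul] at this
    have e : xbar = ∑ t ∈ Finset.Icc 1 T, (1 / (T : ℝ)) • x t := by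
      rw [hxbar]
      funext i
      simp [Finset.sum_apply, Finset.mul_sum]
    rw [e]
    exact this
  have hfin := hsum T
  have hsT : 0 < s T := by linarith [hs T, Real.sqrt_nonneg 5]
  have hQ : 0 < (s T) ^ 2 - 4 * s T - 1 := by
    nlinarith [hs T, Real.sqrt_nonneg 5, Real.sq_sqrt (show (0:ℝ) ≤ 5 by norm_num)]
  have hnn : 0 ≤ L / 2 * (((s T + 1) ^ 2 / ((s T) ^ 2 - 4 * s T - 1) + 2 / s T) *
        (∑ i, (x T i - xstar i) ^ 2)) := by
    have : 0 ≤ ∑ i, (x T i - xstar i) ^ 2 := Finset.sum_nonneg fun i _ => sq_nonneg _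
    positivity
  rw [Finset.sum_sub_distrib] at hfin
  simp only [Finset.sum_const, Nat.card_Icc, Nat.add_sub_cancel, nsmul_eq_mul] at hfin
  rw [← Finset.mul_sum] at hJ
  rw [le_div_iff₀ hTp]
  have hJ2 : f xbar * T ≤ ∑ t ∈ Finset.Icc 1 T, f (x t) := by
    have := mul_le_mul_of_nonneg_right hJ hTp.le
    calc _ ≤ _ := this
      _ = _ := by field_simp
  linarith
end
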